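/- arXiv:1105.0510 — 4 statements merged into one kernel-verified Lean document; each statement's English description precedes it below -/
import Mathlib

section
/- (Theorem 1, unanimous rejection group rule.) In the two-group voting model, for i ∈ {1,2} and every j ∈ S_i, the expected one-step actual capital increment under the rule that a proposal is accepted iff it is supported by at least one group satisfies E[X_j·1_{G₁ ∪ G₂}] = μ·F_{3−i} + (μ·F_i + σ_i·f_i)·(1 − F_{3−i}). -/
open MeasureTheory ProbabilityTheory Real Set

/-- Density of the standard normal distribution. -/
noncomputable def stdPdf (y : ℝ) : ℝ := (Real.sqrt (2 * Real.pi))⁻¹ * Real.exp (-(y ^ 2) / 2)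

/-- Cumulative distribution function of the standard normal distribution. -/
noncomputable def stdCdf (y : ℝ) : ℝ := ∫ x in Set.Iic y, stdPdf x

open Filter Topology

lemma stdPdf_eq_gaussianPDFReal : stdPdf = gaussianPDFReal 0 1 := by
  ext x
  simp [stdPdf, gaussianPDFReal]

lemma stdPdf_neg (x : ℝ) : stdPdf (-x) = stdPdf x := by
  simp [stdPdf]

lemma gaussianReal_real_Ioi (a : ℝ) : (gaussianReal 0 1).real (Ioi a) = stdCdf (-a) := by
  rw [measureReal_def, gaussianReal_apply_eq_integral 0 one_ne_zero,
    ENNReal.toReal_ofReal (integral_nonneg fun x => gaussianPDFReal_nonneg 0 1 x), stdCdf,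
    ← stdPdf_eq_gaussianPDFReal, ← integral_comp_neg_Ioi]
  simp [stdPdf_neg]

lemma hasDerivAt_neg_stdPdf (x : ℝ) : HasDerivAt (fun y => -stdPdf y) (stdPdf x * x) x := by
  unfold stdPdf
  have h : HasDerivAt (fun y : ℝ => -(y ^ 2) / 2) (-x) x := by
    convert! ((hasDerivAt_pow 2 x).neg.div_const 2) using 1
    push_cast
    ring
  convert! (h.exp.const_mul (√(2 * π))⁻¹).neg using 1
  ring

lemma tendsto_stdPdf_atTop : Tendsto stdPdf atTop (𝓝 0) := by
  unfold stdPdf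
  have h : Tendsto (fun y : ℝ => -(y ^ 2) / 2) atTop atBot := by
    simp_rw [neg_div]
    exact tendsto_neg_atTop_atBot.comp ((tendsto_pow_atTop two_ne_zero).atTop_div_const two_pos)
  simpa using (Real.tendsto_exp_atBot.comp h).const_mul (√(2 * π))⁻¹

lemma integrable_id_gaussianReal (m : ℝ) (v : NNReal) :
    Integrable (fun x => x) (gaussianReal m v) :=
  (memLp_id_gaussianReal 1).integrable (by simp)

lemma integrable_stdPdf_mul_id : Integrable (fun x => stdPdf x * x) := by
  have h := integrable_id_gaussianReal 0 1
  rw [gaussianReal_of_var_ne_zero 0 one_ne_zero,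
    integrable_withDensity_iff_integrable_smul' (measurable_gaussianPDF 0 1)
      (ae_of_all _ fun _ => gaussianPDF_lt_top)] at h
  simpa [stdPdf_eq_gaussianPDFReal] using h

lemma setIntegral_Ioi_id_gaussianReal (a : ℝ) :
    ∫ x in Ioi a, x ∂gaussianReal 0 1 = stdPdf a := by
  rw [← integral_indicator measurableSet_Ioi, integral_gaussianReal_eq_integral_smul one_ne_zero,
    ← stdPdf_eq_gaussianPDFReal]
  simp_rw [← indicator_const_smul_apply, smul_eq_mul]
  have h : (fun x => (Ioi a).indicator (fun y => stdPdf x * y) x)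
      = (Ioi a).indicator (fun x => stdPdf x * x) := by
    ext x
    by_cases hx : x ∈ Ioi a <;> simp [hx]
  rw [h, integral_indicator measurableSet_Ioi,
    integral_Ioi_of_hasDerivAt_of_tendsto' (fun x _ => hasDerivAt_neg_stdPdf x)
      integrable_stdPdf_mul_id.integrableOn (by simpa using tendsto_stdPdf_atTop.neg)]
  simp

lemma gaussianReal_eq_map_standard (m s : ℝ) :
    gaussianReal m (s ^ 2).toNNReal = (gaussianReal 0 1).map (fun z => s * z + m) := by
  have h : (fun z : ℝ => s * z + m) = (· + m) ∘ (s * ·) := rfl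
  rw [h, ← Measure.map_map (by fun_prop) (by fun_prop), gaussianReal_map_const_mul,
    gaussianReal_map_add_const]
  congr 1
  · simp
  · ext
    simp [sq_nonneg]

lemma affine_preimage_Ioi {s : ℝ} (hs : 0 < s) (m t : ℝ) :
    (fun z => s * z + m) ⁻¹' Ioi t = Ioi (-((m - t) / s)) := by
  ext z
  simp only [mem_preimage, mem_Ioi]
  rw [← neg_div, div_lt_iff₀ hs, mul_comm s z]
  constructor <;> intro h <;> linarith

lemma gaussianReal_real_Ioi_of_pos {s : ℝ} (hs : 0 < s) (m t : ℝ) :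
    (gaussianReal m (s ^ 2).toNNReal).real (Ioi t) = stdCdf ((m - t) / s) := by
  rw [gaussianReal_eq_map_standard, map_measureReal_apply (by fun_prop) measurableSet_Ioi,
    affine_preimage_Ioi hs, gaussianReal_real_Ioi, neg_neg]

/-- The partial first moment of a normal law above a threshold. -/
lemma setIntegral_Ioi_gaussianReal_of_pos {s : ℝ} (hs : 0 < s) (m t : ℝ) :
    ∫ x in Ioi t, x ∂gaussianReal m (s ^ 2).toNNReal
      = m * stdCdf ((m - t) / s) + s * stdPdf ((m - t) / s) := by
  rw [gaussianReal_eq_map_standard,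
    setIntegral_map measurableSet_Ioi (by fun_prop) (by fun_prop), affine_preimage_Ioi hs,
    integral_add ((integrable_id_gaussianReal 0 1).const_mul s).integrableOn
      (integrable_const m), integral_const_mul, setIntegral_Ioi_id_gaussianReal, stdPdf_neg,
    setIntegral_const, gaussianReal_real_Ioi, neg_neg, smul_eq_mul]
  ring

section Independence

variable {Ω ι 𝓨 𝓩 : Type*} [MeasurableSpace Ω] [MeasurableSpace 𝓨] [MeasurableSpace 𝓩]
  {P : Measure Ω}

lemma setIntegral_preimage_of_indepFun {Y : Ω → 𝓨} {Z : Ω → 𝓩} (h : IndepFun Y Z P)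
    (hY : Measurable Y) (hZ : Measurable Z) {f : 𝓨 → ℝ} (hf : Measurable f)
    {C : Set 𝓩} (hC : MeasurableSet C) :
    ∫ ω in Z ⁻¹' C, f (Y ω) ∂P = (∫ ω, f (Y ω) ∂P) * P.real (Z ⁻¹' C) := by
  have key := h.integral_fun_comp_mul_comp (f := f) (g := C.indicator fun _ => (1 : ℝ))
    hY.aemeasurable hZ.aemeasurable hf.aestronglyMeasurable
    (measurable_const.indicator hC).aestronglyMeasurable
  have hind : (fun ω => C.indicator (fun _ => (1 : ℝ)) (Z ω)) = (Z ⁻¹' C).indicator 1 := rfl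
  rw [hind, integral_indicator_one (hZ hC)] at key
  rw [← key, ← integral_indicator (hZ hC)]
  congr 1
  ext ω
  by_cases hω : Z ω ∈ C <;> simp [hω]

lemma setIntegral_union_of_indepFun [IsProbabilityMeasure P] {Y : Ω → 𝓨} {Z : Ω → 𝓩}
    (h : IndepFun Y Z P) (hY : Measurable Y) (hZ : Measurable Z) {f : 𝓨 → ℝ}
    (hf : Measurable f) (hfi : Integrable (fun ω => f (Y ω)) P) {B : Set 𝓨}
    (hB : MeasurableSet B) {C : Set 𝓩} (hC : MeasurableSet C) :
    ∫ ω in Y ⁻¹' B ∪ Z ⁻¹' C, f (Y ω) ∂P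
      = (∫ ω, f (Y ω) ∂P) * P.real (Z ⁻¹' C)
        + (∫ ω in Y ⁻¹' B, f (Y ω) ∂P) * (1 - P.real (Z ⁻¹' C)) := by
  have hsplit : Y ⁻¹' B ∪ Z ⁻¹' C = Z ⁻¹' C ∪ (Z ⁻¹' Cᶜ ∩ Y ⁻¹' B) := by
    ext ω
    simp only [mem_union, mem_inter_iff, mem_preimage, mem_compl_iff]
    tauto
  have hdisj : Disjoint (Z ⁻¹' C) (Z ⁻¹' Cᶜ ∩ Y ⁻¹' B) :=
    disjoint_left.mpr fun ω hω hω' => hω'.1 hω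
  rw [hsplit, setIntegral_union hdisj ((hZ hC.compl).inter (hY hB)) hfi.integrableOn
    hfi.integrableOn, setIntegral_preimage_of_indepFun h hY hZ hf hC]
  congr 1
  rw [← setIntegral_indicator (hY hB)]
  have := setIntegral_preimage_of_indepFun h hY hZ (hf.indicator hB) hC.compl
  rw [preimage_compl, probReal_compl_eq_one_sub (hZ hC)] at this
  rw [← integral_indicator (hY hB)]
  exact this

variable {X : ι → Ω → ℝ}

lemma map_sum_gaussianReal [IsProbabilityMeasure P] {m : ℝ} {v : NNReal}
    (hmeas : ∀ j, Measurable (X j)) (hindep : iIndepFun X P)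
    (hdist : ∀ j, P.map (X j) = gaussianReal m v) (S : Finset ι) :
    P.map (∑ j ∈ S, X j) = gaussianReal (S.card * m) (S.card * v) := by
  classical
  induction S using Finset.induction_on with
  | empty =>
    simp only [Finset.sum_empty, Finset.card_empty, Nat.cast_zero, zero_mul,
      gaussianReal_zero_var]
    exact (Measure.map_const P (0 : ℝ)).trans (by simp)
  | insert a S ha ih =>
    rw [Finset.sum_insert ha, gaussianReal_add_gaussianReal_of_indepFun
      (hindep.indepFun_finsetSum_of_notMem hmeas ha).symm (hdist a) ih,
      Finset.card_insert_of_notMem ha]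
    push_cast
    ring_nf

lemma map_average_gaussianReal [IsProbabilityMeasure P] {m s : ℝ}
    (hmeas : ∀ j, Measurable (X j)) (hindep : iIndepFun X P)
    (hdist : ∀ j, P.map (X j) = gaussianReal m (s ^ 2).toNNReal) {S : Finset ι}
    (hS : 1 ≤ S.card) :
    P.map (fun ω => (S.card : ℝ)⁻¹ * ∑ j ∈ S, X j ω)
      = gaussianReal m ((s / √(S.card : ℝ)) ^ 2).toNNReal := by
  have hcard : (0 : ℝ) < S.card := by exact_mod_cast hS
  have h : (fun ω => (S.card : ℝ)⁻¹ * ∑ j ∈ S, X j ω)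
      = ((S.card : ℝ)⁻¹ * ·) ∘ (∑ j ∈ S, X j) := by
    ext ω
    simp
  rw [h, ← Measure.map_map (by fun_prop) (by fun_prop),
    map_sum_gaussianReal hmeas hindep hdist, gaussianReal_map_const_mul]
  congr 1
  · field_simp
  · ext
    rw [Real.coe_toNNReal _ (sq_nonneg _), NNReal.coe_mul, NNReal.coe_mul, NNReal.coe_mk,
      NNReal.coe_natCast, Real.coe_toNNReal _ (sq_nonneg _), div_pow, Real.sq_sqrt hcard.le]
    field_simp

/-- The joint law of a summand and the sum does not depend on the summand. -/
lemma setIntegral_summand_eq [IsProbabilityMeasure P] {m : ℝ} {v : NNReal}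
    (hmeas : ∀ j, Measurable (X j)) (hindep : iIndepFun X P)
    (hdist : ∀ j, P.map (X j) = gaussianReal m v) {S : Finset ι} {j k : ι}
    (hj : j ∈ S) (hk : k ∈ S) {B : Set ℝ} (hB : MeasurableSet B) :
    ∫ ω in {ω | ∑ i ∈ S, X i ω ∈ B}, X j ω ∂P
      = ∫ ω in {ω | ∑ i ∈ S, X i ω ∈ B}, X k ω ∂P := by
  classical
  have hpair : MeasurableSet {p : ℝ × ℝ | p.2 + p.1 ∈ B} :=
    (measurable_snd.add measurable_fst) hB
  have key : ∀ l ∈ S, ∫ ω in {ω | ∑ i ∈ S, X i ω ∈ B}, X l ω ∂P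
      = ∫ p in {p : ℝ × ℝ | p.2 + p.1 ∈ B}, p.2
        ∂(gaussianReal ((S.card - 1 : ℕ) * m) ((S.card - 1 : ℕ) * v)).prod
          (gaussianReal m v) := by
    intro l hl
    have hrest : Measurable (∑ i ∈ S.erase l, X i) := by fun_prop
    have hind := hindep.indepFun_finsetSum_of_notMem hmeas (Finset.notMem_erase l S)
    rw [← Finset.card_erase_of_mem hl, ← map_sum_gaussianReal hmeas hindep hdist (S.erase l),
      ← hdist l, ← hind.map_prod_eq_prod_map_map hrest.aemeasurable (hmeas l).aemeasurable,
      setIntegral_map hpair (by fun_prop)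
        (hrest.prodMk (hmeas l)).aemeasurable]
    have hset : {ω | ∑ i ∈ S, X i ω ∈ B}
        = (fun ω => ((∑ i ∈ S.erase l, X i) ω, X l ω)) ⁻¹' {p : ℝ × ℝ | p.2 + p.1 ∈ B} := by
      ext ω
      simp only [mem_ofPred_eq, mem_preimage, Finset.sum_apply, Finset.add_sum_erase S (X · ω) hl]
    rw [hset]
  rw [key j hj, key k hk]

lemma integrable_of_map_gaussianReal {Y : Ω → ℝ} (hY : Measurable Y) {m : ℝ} {v : NNReal}
    (hdist : P.map Y = gaussianReal m v) : Integrable Y P := by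
  have h := integrable_id_gaussianReal m v
  rw [← hdist] at h
  exact h.comp_measurable hY

lemma integral_of_map_gaussianReal {Y : Ω → ℝ} (hY : Measurable Y) {m : ℝ} {v : NNReal}
    (hdist : P.map Y = gaussianReal m v) : ∫ ω, Y ω ∂P = m := by
  rw [← integral_id_gaussianReal (μ := m) (v := v), ← hdist,
    integral_map hY.aemeasurable (by fun_prop)]

lemma setIntegral_summand_eq_average [IsProbabilityMeasure P] {m : ℝ} {v : NNReal}
    (hmeas : ∀ j, Measurable (X j)) (hindep : iIndepFun X P)
    (hdist : ∀ j, P.map (X j) = gaussianReal m v) {S : Finset ι} {j : ι}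
    (hj : j ∈ S) (t : ℝ) :
    ∫ ω in {ω | t < (S.card : ℝ)⁻¹ * ∑ i ∈ S, X i ω}, X j ω ∂P
      = ∫ ω in {ω | t < (S.card : ℝ)⁻¹ * ∑ i ∈ S, X i ω},
          (S.card : ℝ)⁻¹ * ∑ i ∈ S, X i ω ∂P := by
  have hcard : (S.card : ℝ) ≠ 0 := by exact_mod_cast (Finset.card_pos.mpr ⟨j, hj⟩).ne'
  have hB : MeasurableSet {x : ℝ | t < (S.card : ℝ)⁻¹ * x} :=
    measurableSet_lt measurable_const (by fun_prop)
  have hsummand : ∀ i ∈ S, ∫ ω in {ω | t < (S.card : ℝ)⁻¹ * ∑ i ∈ S, X i ω}, X i ω ∂P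
      = ∫ ω in {ω | t < (S.card : ℝ)⁻¹ * ∑ i ∈ S, X i ω}, X j ω ∂P := fun i hi =>
    setIntegral_summand_eq hmeas hindep hdist hi hj hB
  rw [integral_const_mul, integral_finsetSum S fun i _ =>
    (integrable_of_map_gaussianReal (hmeas i) (hdist i)).integrableOn,
    Finset.sum_congr rfl fun i hi => hsummand i hi, Finset.sum_const, nsmul_eq_mul,
    inv_mul_cancel_left₀ hcard]

lemma setIntegral_summand_union_average [IsProbabilityMeasure P] {m s : ℝ} (hs : 0 < s)
    (hmeas : ∀ j, Measurable (X j)) (hindep : iIndepFun X P)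
    (hdist : ∀ j, P.map (X j) = gaussianReal m (s ^ 2).toNNReal) {S T : Finset ι}
    (hST : Disjoint S T) (hT : 1 ≤ T.card) (t u : ℝ) {j : ι} (hj : j ∈ S) :
    ∫ ω in {ω | t < (S.card : ℝ)⁻¹ * ∑ i ∈ S, X i ω}
        ∪ {ω | u < (T.card : ℝ)⁻¹ * ∑ i ∈ T, X i ω}, X j ω ∂P
      = m * stdCdf ((m - u) / (s / √(T.card : ℝ)))
        + (m * stdCdf ((m - t) / (s / √(S.card : ℝ)))
          + s / √(S.card : ℝ) * stdPdf ((m - t) / (s / √(S.card : ℝ))))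
          * (1 - stdCdf ((m - u) / (s / √(T.card : ℝ)))) := by
  have hS : 1 ≤ S.card := Finset.card_pos.mpr ⟨j, hj⟩
  have scale_pos : ∀ {U : Finset ι}, 1 ≤ U.card → 0 < s / √(U.card : ℝ) := fun hU =>
    div_pos hs (Real.sqrt_pos.mpr (by exact_mod_cast hU))
  have average_meas : ∀ U : Finset ι,
      Measurable fun ω => (U.card : ℝ)⁻¹ * ∑ i ∈ U, X i ω := fun U =>
    (Finset.measurable_fun_sum U fun i _ => hmeas i).const_mul _
  have event_meas : ∀ (U : Finset ι) (r : ℝ),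
      MeasurableSet {y : U → ℝ | r < (U.card : ℝ)⁻¹ * ∑ i, y i} := fun U r =>
    measurableSet_lt measurable_const (by fun_prop)
  have event_eq : ∀ (U : Finset ι) (r : ℝ), {ω | r < (U.card : ℝ)⁻¹ * ∑ i ∈ U, X i ω}
      = (fun ω (i : U) => X i ω) ⁻¹' {y : U → ℝ | r < (U.card : ℝ)⁻¹ * ∑ i, y i} := by
    intro U r
    ext ω
    simp only [mem_ofPred_eq, mem_preimage, Finset.sum_coe_sort U (X · ω)]
  have hprob : P.real {ω | u < (T.card : ℝ)⁻¹ * ∑ i ∈ T, X i ω}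
      = stdCdf ((m - u) / (s / √(T.card : ℝ))) := by
    rw [← gaussianReal_real_Ioi_of_pos (scale_pos hT),
      ← map_average_gaussianReal hmeas hindep hdist hT,
      map_measureReal_apply (average_meas T) measurableSet_Ioi]
    rfl
  have hmoment : ∫ ω in {ω | t < (S.card : ℝ)⁻¹ * ∑ i ∈ S, X i ω}, X j ω ∂P
      = m * stdCdf ((m - t) / (s / √(S.card : ℝ)))
        + s / √(S.card : ℝ) * stdPdf ((m - t) / (s / √(S.card : ℝ))) := by
    rw [setIntegral_summand_eq_average hmeas hindep hdist hj,
      ← setIntegral_Ioi_gaussianReal_of_pos (scale_pos hS),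
      ← map_average_gaussianReal hmeas hindep hdist hS,
      setIntegral_map measurableSet_Ioi (by fun_prop) (average_meas S).aemeasurable]
    rfl
  have key := setIntegral_union_of_indepFun (hindep.indepFun_finset S T hST hmeas)
    (measurable_pi_lambda _ fun i => hmeas i) (measurable_pi_lambda _ fun i => hmeas i)
    (measurable_pi_apply (⟨j, hj⟩ : S))
    (integrable_of_map_gaussianReal (hmeas j) (hdist j)) (event_meas S t) (event_meas T u)
  rw [← event_eq, ← event_eq, hprob, hmoment,
    integral_of_map_gaussianReal (hmeas j) (hdist j)] at key
  exact key

end Independence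

/-- Theorem 1, unanimous rejection group rule: for `i ∈ {1,2}` and every `j ∈ S_i`,
`E[X_j·1_{G₁ ∪ G₂}] = μ·F_{3−i} + (μ·F_i + σ_i·f_i)·(1 − F_{3−i})`. -/
theorem expected_increment_unanimous_rejection
    {Ω ι : Type*} [MeasureSpace Ω] [IsProbabilityMeasure (ℙ : Measure Ω)]
    (μ σ : ℝ) (hσ : 0 < σ)
    (X : ι → Ω → ℝ) (hmeas : ∀ j, Measurable (X j))
    (hindep : iIndepFun X ℙ)
    (hdist : ∀ j, Measure.map (X j) ℙ = gaussianReal μ ((σ ^ 2).toNNReal))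
    (S₁ S₂ : Finset ι) (hdisj : Disjoint S₁ S₂)
    (g₁ g₂ : ℕ) (hcard₁ : S₁.card = g₁) (hcard₂ : S₂.card = g₂)
    (hg₁ : 1 ≤ g₁) (hg₂ : 1 ≤ g₂)
    (t₁ t₂ : ℝ)
    (A₁ A₂ : Ω → ℝ)
    (hA₁ : A₁ = fun ω => (g₁ : ℝ)⁻¹ * ∑ j ∈ S₁, X j ω)
    (hA₂ : A₂ = fun ω => (g₂ : ℝ)⁻¹ * ∑ j ∈ S₂, X j ω)
    :
    (∀ j ∈ S₁, ∫ ω in {ω | t₁ < A₁ ω} ∪ {ω | t₂ < A₂ ω}, X j ω =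
      μ * stdCdf ((μ - t₂) / (σ / Real.sqrt g₂)) + (μ * stdCdf ((μ - t₁) / (σ / Real.sqrt g₁)) + (σ / Real.sqrt g₁) * stdPdf ((μ - t₁) / (σ / Real.sqrt g₁))) * (1 - stdCdf ((μ - t₂) / (σ / Real.sqrt g₂)))) ∧
    (∀ j ∈ S₂, ∫ ω in {ω | t₁ < A₁ ω} ∪ {ω | t₂ < A₂ ω}, X j ω =
      μ * stdCdf ((μ - t₁) / (σ / Real.sqrt g₁)) + (μ * stdCdf ((μ - t₂) / (σ / Real.sqrt g₂)) + (σ / Real.sqrt g₂) * stdPdf ((μ - t₂) / (σ / Real.sqrt g₂))) * (1 - stdCdf ((μ - t₁) / (σ / Real.sqrt g₁)))) := by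
  subst hA₁ hA₂ hcard₁ hcard₂
  refine ⟨fun j hj => ?_, fun j hj => ?_⟩
  · exact setIntegral_summand_union_average hσ hmeas hindep hdist hdisj hg₂ t₁ t₂ hj
  · rw [union_comm]
    exact setIntegral_summand_union_average hσ hmeas hindep hdist hdisj.symm hg₁ t₂ t₁ hj
end

section
/- (Corollary 2.) In the two-group voting model with μ = 0, fix the threshold t₁ ∈ ℝ of Group 1 and let t ∈ ℝ. Then for every j ∈ S₂, the expected actual capital increment of member j is the same for Group 2 threshold t as for Group 2 threshold −t, under either voting rule: E[X_j·1_{{A₁>t₁} ∪ {A₂>t}}] = E[X_j·1_{{A₁>t₁} ∪ {A₂>−t}}] and E[X_j·1_{{A₁>t₁} ∩ {A₂>t}}] = E[X_j·1_{{A₁>t₁} ∩ {A₂>−t}}]. -/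
open MeasureTheory ProbabilityTheory Real Set

/-- A finite sum of independent centered Gaussian variables of variance `v` is centered Gaussian,
with variance multiplied by the number of terms. -/
lemma map_finset_sum_gaussianReal {Ω ι : Type*} {m : MeasurableSpace Ω} {P : Measure Ω}
    [IsProbabilityMeasure P] {v : NNReal} {X : ι → Ω → ℝ} (hmeas : ∀ j, Measurable (X j))
    (hindep : iIndepFun X P) (hdist : ∀ j, P.map (X j) = gaussianReal 0 v) (S : Finset ι) :
    P.map (∑ j ∈ S, X j) = gaussianReal 0 (S.card * v) := by
  classical
  induction S using Finset.induction_on with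
  | empty =>
    simp only [Finset.sum_empty, Finset.card_empty, Nat.cast_zero, zero_mul,
      gaussianReal_zero_var]
    change P.map (fun _ => (0 : ℝ)) = _
    simp
  | insert a s ha ih =>
    rw [Finset.sum_insert ha, gaussianReal_add_gaussianReal_of_indepFun
      (hindep.indepFun_finsetSum_of_notMem hmeas ha).symm (hdist a) ih,
      Finset.card_insert_of_notMem ha]
    congr 1
    · simp
    · push_cast
      ring

/-- Changing the sign of some members of an independent family of symmetric variables does not
change the joint law. -/
lemma identDistrib_neg_on_finset {Ω ι : Type*} [DecidableEq ι] {m : MeasurableSpace Ω}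
    {P : Measure Ω} {X : ι → Ω → ℝ} (hmeas : ∀ j, Measurable (X j))
    (hindep : iIndepFun X P) (hsymm : ∀ j, P.map (fun ω => -X j ω) = P.map (X j))
    (S : Finset ι) :
    IdentDistrib (fun ω i => X i ω) (fun ω i => if i ∈ S then -X i ω else X i ω) P P := by
  have hmeas' : ∀ i, Measurable fun ω => if i ∈ S then -X i ω else X i ω := fun i => by
    split_ifs
    exacts [(hmeas i).neg, hmeas i]
  have hindep' : iIndepFun (fun i ω => if i ∈ S then -X i ω else X i ω) P :=
    hindep.comp (fun i x => if i ∈ S then -x else x) fun i => by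
      split_ifs
      exacts [measurable_neg, measurable_id]
  refine ⟨(measurable_pi_lambda _ hmeas).aemeasurable,
    (measurable_pi_lambda _ hmeas').aemeasurable, ?_⟩
  rw [hindep.map_fun_eq_infinitePi_map hmeas, hindep'.map_fun_eq_infinitePi_map hmeas']
  congr 1
  funext i
  split_ifs
  exacts [(hsymm i).symm, rfl]

section Symmetry

variable {Ω : Type*} {m : MeasurableSpace Ω} {P : Measure Ω} {Z A Y : Ω → ℝ}

lemma setIntegral_eq_neg_of_identDistrib_neg (hZ : Measurable Z) (hA : Measurable A)
    (h : IdentDistrib (fun ω => (Z ω, A ω, Y ω)) (fun ω => (Z ω, -A ω, -Y ω)) P P)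
    {D E : Set ℝ} (hD : MeasurableSet D) (hE : MeasurableSet E) :
    ∫ ω in Z ⁻¹' D ∩ A ⁻¹' E, Y ω ∂P = -∫ ω in Z ⁻¹' D ∩ (fun ω => -A ω) ⁻¹' E, Y ω ∂P := by
  classical
  have key : Measurable ((D ×ˢ E ×ˢ univ).indicator fun p : ℝ × ℝ × ℝ => p.2.2) :=
    (measurable_snd.comp measurable_snd).indicator (hD.prod (hE.prod MeasurableSet.univ))
  have hnegA : Measurable fun ω => -A ω := hA.neg
  rw [← integral_neg, ← integral_indicator ((hZ hD).inter (hA hE)),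
    ← integral_indicator ((hZ hD).inter (hnegA hE))]
  convert (h.comp key).integral_eq using 2 <;>
  · ext ω
    simp [indicator_apply]

/-- If `(Z, A, Y)` and `(Z, -A, -Y)` have the same law and `A` has no atom at `-s`, then the
integral of `Y` over `{Z ∈ D, A > s}` is even in `s`. -/
lemma setIntegral_threshold_even (hZ : Measurable Z) (hA : Measurable A) (hY : Integrable Y P)
    (h : IdentDistrib (fun ω => (Z ω, A ω, Y ω)) (fun ω => (Z ω, -A ω, -Y ω)) P P)
    {D : Set ℝ} (hD : MeasurableSet D) {s : ℝ} (hs : P (A ⁻¹' {-s}) = 0) :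
    ∫ ω in Z ⁻¹' D ∩ {ω | s < A ω}, Y ω ∂P = ∫ ω in Z ⁻¹' D ∩ {ω | -s < A ω}, Y ω ∂P := by
  have hflip := setIntegral_eq_neg_of_identDistrib_neg hZ hA h hD (measurableSet_Ioi (a := s))
  have hzero := setIntegral_eq_neg_of_identDistrib_neg hZ hA h hD MeasurableSet.univ
  simp only [preimage_univ, inter_univ] at hzero
  have hsplit := integral_inter_add_sdiff (s := Z ⁻¹' D) (hA (measurableSet_Ici (a := -s)))
    hY.integrableOn
  have hdiff : Z ⁻¹' D \ A ⁻¹' Ici (-s) = Z ⁻¹' D ∩ (fun ω => -A ω) ⁻¹' Ioi s := by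
    ext ω
    simp only [mem_sdiff, mem_inter_iff, mem_preimage, mem_Ici, mem_Ioi, not_le, lt_neg]
  have hatom : ∫ ω in Z ⁻¹' D ∩ A ⁻¹' Ici (-s), Y ω ∂P
      = ∫ ω in Z ⁻¹' D ∩ {ω | -s < A ω}, Y ω ∂P := by
    refine setIntegral_congr_set ?_
    have hne : ∀ᵐ ω ∂P, A ω ≠ -s := by
      rw [ae_iff]
      simpa [preimage] using hs
    filter_upwards [hne] with ω hω
    refine propext (and_congr_right fun _ => ?_)
    exact ⟨fun hle => lt_of_le_of_ne hle (Ne.symm hω), fun hlt => le_of_lt (α := ℝ) hlt⟩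
  rw [hdiff] at hsplit
  change ∫ ω in Z ⁻¹' D ∩ A ⁻¹' Ioi s, Y ω ∂P = _
  linarith

end Symmetry

/-- Corollary 2: with `μ = 0`, for fixed `t₁` and any `t ∈ ℝ`, the expected actual capital
increment of a Group 2 member is the same for Group 2 threshold `t` as for `−t`,
under either voting rule. -/
theorem group2_increment_symmetric_in_threshold
    {Ω ι : Type*} [MeasureSpace Ω] [IsProbabilityMeasure (ℙ : Measure Ω)]
    (σ : ℝ) (hσ : 0 < σ)
    (X : ι → Ω → ℝ) (hmeas : ∀ j, Measurable (X j))
    (hindep : iIndepFun X ℙ)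
    (hdist : ∀ j, Measure.map (X j) ℙ = gaussianReal 0 ((σ ^ 2).toNNReal))
    (S₁ S₂ : Finset ι) (hdisj : Disjoint S₁ S₂)
    (g₁ g₂ : ℕ) (hcard₁ : S₁.card = g₁) (hcard₂ : S₂.card = g₂)
    (hg₁ : 1 ≤ g₁) (hg₂ : 1 ≤ g₂)
    (t₁ : ℝ)
    (A₁ A₂ : Ω → ℝ)
    (hA₁ : A₁ = fun ω => (g₁ : ℝ)⁻¹ * ∑ j ∈ S₁, X j ω)
    (hA₂ : A₂ = fun ω => (g₂ : ℝ)⁻¹ * ∑ j ∈ S₂, X j ω)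
    (t : ℝ) :
    ∀ j ∈ S₂,
      (∫ ω in {ω | t₁ < A₁ ω} ∪ {ω | t < A₂ ω}, X j ω) =
        (∫ ω in {ω | t₁ < A₁ ω} ∪ {ω | -t < A₂ ω}, X j ω) ∧
      (∫ ω in {ω | t₁ < A₁ ω} ∩ {ω | t < A₂ ω}, X j ω) =
        (∫ ω in {ω | t₁ < A₁ ω} ∩ {ω | -t < A₂ ω}, X j ω) := by
  classical
  intro j hj
  have hA₁m : Measurable A₁ := by
    rw [hA₁]
    fun_prop
  have hA₂m : Measurable A₂ := by
    rw [hA₂]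
    fun_prop
  have hY : Integrable (X j) ℙ := by
    have hid : Integrable id (Measure.map (X j) ℙ) := by
      rw [hdist j]
      exact memLp_one_iff_integrable.1 (memLp_id_gaussianReal 1)
    exact hid.comp_measurable (hmeas j)
  have hsymm : ∀ i, Measure.map (fun ω => -X i ω) ℙ = Measure.map (X i) ℙ := fun i => by
    have hmap := Measure.map_map (μ := ℙ) (measurable_neg (G := ℝ)) (hmeas i)
    rw [hdist i] at hmap ⊢
    have hneg := gaussianReal_map_neg (μ := 0) (v := (σ ^ 2).toNNReal)
    rw [neg_zero] at hneg
    exact hmap.symm.trans hneg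
  have hlaw : IdentDistrib (fun ω => (A₁ ω, A₂ ω, X j ω)) (fun ω => (A₁ ω, -A₂ ω, -X j ω)) := by
    have hstat : Measurable fun x : ι → ℝ =>
        ((g₁ : ℝ)⁻¹ * ∑ i ∈ S₁, x i, (g₂ : ℝ)⁻¹ * ∑ i ∈ S₂, x i, x j) := by fun_prop
    convert (identDistrib_neg_on_finset hmeas hindep hsymm S₂).comp hstat using 1
    · ext ω : 1
      simp [hA₁, hA₂]
    · ext ω : 1
      have h₁ : ∑ i ∈ S₁, (if i ∈ S₂ then -X i ω else X i ω) = ∑ i ∈ S₁, X i ω :=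
        Finset.sum_congr rfl fun i hi => if_neg (Finset.disjoint_left.1 hdisj hi)
      have h₂ : ∑ i ∈ S₂, (if i ∈ S₂ then -X i ω else X i ω) = -∑ i ∈ S₂, X i ω := by
        rw [← Finset.sum_neg_distrib]
        exact Finset.sum_congr rfl fun i hi => if_pos hi
      simp [hA₁, hA₂, h₁, h₂, hj]
  have hg₂' : (g₂ : ℝ) ≠ 0 := by
    exact_mod_cast (by omega : g₂ ≠ 0)
  have hatom : (ℙ : Measure Ω) (A₂ ⁻¹' {-t}) = 0 := by
    have hset : A₂ ⁻¹' {-t} = (∑ i ∈ S₂, X i) ⁻¹' {g₂ * -t} := by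
      ext ω
      simp only [hA₂, mem_preimage, mem_singleton_iff, Finset.sum_apply]
      rw [inv_mul_eq_iff_eq_mul₀ hg₂']
    have hv : (S₂.card : NNReal) * (σ ^ 2).toNNReal ≠ 0 := by
      refine mul_ne_zero ?_ (Real.toNNReal_pos.2 (by positivity)).ne'
      exact_mod_cast (by omega : S₂.card ≠ 0)
    have := nullSingletonClass_gaussianReal (μ := 0) hv
    have hsum : Measurable (∑ i ∈ S₂, X i) := by fun_prop
    rw [hset, ← Measure.map_apply hsum (measurableSet_singleton _),
      map_finset_sum_gaussianReal hmeas hindep hdist]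
    exact measure_singleton _
  refine ⟨?_, setIntegral_threshold_even hA₁m hA₂m hY hlaw measurableSet_Ioi hatom⟩
  have hunion : ∀ s : ℝ, ∫ ω in {ω | t₁ < A₁ ω} ∪ {ω | s < A₂ ω}, X j ω =
      (∫ ω in {ω | t₁ < A₁ ω}, X j ω) + ∫ ω in A₁ ⁻¹' Iic t₁ ∩ {ω | s < A₂ ω}, X j ω := by
    intro s
    have hset : {ω | t₁ < A₁ ω} ∪ {ω | s < A₂ ω} =
        {ω | t₁ < A₁ ω} ∪ (A₁ ⁻¹' Iic t₁ ∩ {ω | s < A₂ ω}) := by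
      ext ω
      simp only [mem_union, mem_inter_iff, mem_ofPred_eq, mem_preimage, mem_Iic]
      rw [← not_lt]
      tauto
    rw [hset]
    refine setIntegral_union ?_ ((hA₁m measurableSet_Iic).inter (hA₂m measurableSet_Ioi))
      hY.integrableOn hY.integrableOn
    exact disjoint_left.2 fun ω h₁ h₂ => not_lt_of_ge (α := ℝ) h₂.1 h₁
  rw [hunion, hunion, setIntegral_threshold_even hA₁m hA₂m hY hlaw measurableSet_Iic hatom]
end

section
/- (Remark 1 and Corollary 3, second part.) In the two-group voting model with μ = 0 and t₁ = 0, for every j ∈ S₂ and every t₂ ∈ ℝ, the expected actual capital increment of member j is the same under both voting rules and equals (1/2)·σ₂·φ(t₂/σ₂): E[X_j·1_{G₁ ∪ G₂}] = E[X_j·1_{G₁ ∩ G₂}] = (1/2)·σ₂·φ(t₂/σ₂). -/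
open MeasureTheory ProbabilityTheory Real Set

open scoped NNReal Topology

/-- Integrating an independent variable over an event factors. -/
lemma setIntegral_preimage_eq_mul_of_indepFun {Ω β : Type*} [MeasurableSpace Ω]
    [MeasurableSpace β] {P : Measure Ω} {U : Ω → β} {Y : Ω → ℝ} (h : IndepFun U Y P)
    (hU : Measurable U) (hY : Measurable Y) {s : Set β} (hs : MeasurableSet s) :
    ∫ ω in U ⁻¹' s, Y ω ∂P = P.real (U ⁻¹' s) * ∫ ω, Y ω ∂P := by
  have hind : Measurable (s.indicator (fun _ ↦ (1 : ℝ))) := measurable_const.indicator hs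
  have hmul := (h.comp hind measurable_id).integral_fun_mul_eq_mul_integral
    (hind.comp hU).aestronglyMeasurable hY.aestronglyMeasurable
  have hprob : ∫ ω, (s.indicator (fun _ ↦ (1 : ℝ)) ∘ U) ω ∂P = P.real (U ⁻¹' s) := by
    rw [← integral_indicator_one (hU hs)]
    rfl
  rw [hprob] at hmul
  rw [← integral_indicator (hU hs)]
  refine Eq.trans (integral_congr_ae (ae_of_all _ fun ω ↦ ?_)) hmul
  by_cases hω : U ω ∈ s <;> simp [hω]

/-- The first moment of a centered Gaussian over a half-line. -/
lemma setIntegral_Ioi_id_gaussianReal_s9 {v : ℝ≥0} (hv : v ≠ 0) (t : ℝ) :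
    ∫ x in Ioi t, x ∂(gaussianReal 0 v) = v * gaussianPDFReal 0 v t := by
  have hv' : (0 : ℝ) < v := by positivity
  rw [← integral_indicator measurableSet_Ioi, integral_gaussianReal_eq_integral_smul hv]
  have hind : (fun x ↦ gaussianPDFReal 0 v x • (Ioi t).indicator (fun x ↦ x) x) =
      (Ioi t).indicator (fun x ↦ gaussianPDFReal 0 v x * x) := by
    ext x
    by_cases hx : x ∈ Ioi t <;> simp [hx]
  rw [hind, integral_indicator measurableSet_Ioi]
  have hderiv (x : ℝ) : HasDerivAt (fun x ↦ -(v * gaussianPDFReal 0 v x))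
      (gaussianPDFReal 0 v x * x) x := by
    simp only [gaussianPDFReal, sub_zero]
    have hpow : HasDerivAt (fun x : ℝ ↦ -x ^ 2 / (2 * v)) (-(2 * x) / (2 * v)) x := by
      simpa using ((hasDerivAt_pow 2 x).neg).div_const (2 * (v : ℝ))
    convert! ((hpow.exp.const_mul (√(2 * π * v))⁻¹).const_mul (v : ℝ)).neg using 1
    field_simp
  have hint : Integrable (fun x ↦ gaussianPDFReal 0 v x * x) := by
    have := (integrable_mul_exp_neg_mul_sq (b := (2 * (v : ℝ))⁻¹) (by positivity)).const_mul
      (√(2 * π * v))⁻¹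
    refine this.congr (ae_of_all _ fun x ↦ ?_)
    simp only [gaussianPDFReal, sub_zero]
    rw [show -x ^ 2 / (2 * (v : ℝ)) = -(2 * (v : ℝ))⁻¹ * x ^ 2 by ring]
    ring
  have hlim : Filter.Tendsto (fun x ↦ -(v * gaussianPDFReal 0 v x)) Filter.atTop (𝓝 0) := by
    have hexp : Filter.Tendsto (fun x : ℝ ↦ rexp (-x ^ 2 / (2 * v))) Filter.atTop (𝓝 0) := by
      refine tendsto_exp_atBot.comp (Filter.Tendsto.atBot_div_const (by positivity) ?_)
      exact Filter.tendsto_neg_atTop_atBot.comp (Filter.tendsto_pow_atTop two_ne_zero)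
    simpa [gaussianPDFReal] using
      ((hexp.const_mul (√(2 * π * v))⁻¹).const_mul (v : ℝ)).neg
  rw [integral_Ioi_of_hasDerivAt_of_tendsto' (fun x _ ↦ hderiv x) hint.integrableOn hlim]
  ring

/-- A nondegenerate centered Gaussian is positive with probability one half. -/
lemma gaussianReal_real_Ioi_zero {v : ℝ≥0} (hv : v ≠ 0) :
    (gaussianReal 0 v).real (Ioi 0) = 1 / 2 := by
  have := nullSingletonClass_gaussianReal (μ := 0) hv
  have hneg : (gaussianReal 0 v).real (Ioi 0) = (gaussianReal 0 v).real (Iio 0) := by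
    conv_lhs => rw [← neg_zero, ← gaussianReal_map_neg]
    rw [map_measureReal_apply measurable_neg (by measurability)]
    simp
  have hadd := probReal_add_probReal_compl (μ := gaussianReal 0 v) (measurableSet_Ioi (a := (0:ℝ)))
  rw [compl_Ioi, measureReal_congr Iio_ae_eq_Iic.symm, ← hneg] at hadd
  linarith

section IndependentGaussians

variable {Ω ι : Type*} [MeasurableSpace Ω] {P : Measure Ω} {X : ι → Ω → ℝ} {v : ℝ≥0}

/-- The law of a sum of independent centered Gaussians with the same variance. -/
lemma map_sum_eq_gaussianReal [IsProbabilityMeasure P] (hX : ∀ i, Measurable (X i))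
    (hindep : iIndepFun X P) (hlaw : ∀ i, P.map (X i) = gaussianReal 0 v) (S : Finset ι) :
    P.map (∑ i ∈ S, X i) = gaussianReal 0 (S.card * v) := by
  classical
  induction S using Finset.induction_on with
  | empty =>
    simp only [Finset.sum_empty, Finset.card_empty, Nat.cast_zero, zero_mul, gaussianReal_zero_var]
    exact (Measure.map_const P (0 : ℝ)).trans (by simp)
  | insert a S ha ih =>
    rw [Finset.sum_insert ha, Finset.card_insert_of_notMem ha,
      gaussianReal_add_gaussianReal_of_indepFun
        (hindep.indepFun_finsetSum_of_notMem hX ha).symm (hlaw a) ih]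
    congr 1
    · simp
    · push_cast
      ring

lemma hasGaussianLaw_of_map_eq_gaussianReal {Y : Ω → ℝ} {m : ℝ}
    (hlaw : P.map Y = gaussianReal m v) : HasGaussianLaw Y P where
  isGaussian_map := by
    rw [hlaw]
    infer_instance

lemma memLp_two_of_map_eq_gaussianReal {Y : Ω → ℝ} {m : ℝ} (hlaw : P.map Y = gaussianReal m v) :
    MemLp Y 2 P :=
  (hasGaussianLaw_of_map_eq_gaussianReal hlaw).memLp_two

/-- The deviation from the sample mean is independent of the sum. -/
lemma indepFun_sum_sub_mean [IsProbabilityMeasure P] (hX : ∀ i, Measurable (X i))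
    (hindep : iIndepFun X P) (hlaw : ∀ i, P.map (X i) = gaussianReal 0 v) {S : Finset ι}
    {j : ι} (hj : j ∈ S) :
    IndepFun (∑ i ∈ S, X i) (X j - (S.card : ℝ)⁻¹ • ∑ i ∈ S, X i) P := by
  have hcard : (S.card : ℝ) ≠ 0 := by
    exact_mod_cast (Finset.card_pos.2 ⟨j, hj⟩).ne'
  have hL (i : ι) : MemLp (X i) 2 P := memLp_two_of_map_eq_gaussianReal (hlaw i)
  have hLsum : MemLp (∑ i ∈ S, X i) 2 P :=
    memLp_two_of_map_eq_gaussianReal (map_sum_eq_gaussianReal hX hindep hlaw S)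
  have hvar (i : ι) : cov[X i, X i; P] = v := by
    rw [covariance_self (hX i).aemeasurable]
    simpa [hlaw i, variance_id_gaussianReal] using
      (variance_map (X := id) (μ := P) (Y := X i) aemeasurable_id (hX i).aemeasurable).symm
  have hcov (k : ι) (hk : k ∈ S) : cov[∑ i ∈ S, X i, X k; P] = v := by
    rw [covariance_sum_left' (fun i _ ↦ hL i) (hL k), Finset.sum_eq_single_of_mem k hk, hvar]
    intro i _ hik
    exact (hindep.indepFun hik).covariance_eq_zero (hL i) (hL k)
  have hjoint : HasGaussianLaw (fun ω ↦ fun i : S ↦ X i ω) P :=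
    (hindep.precomp Subtype.val_injective).hasGaussianLaw fun i ↦
      hasGaussianLaw_of_map_eq_gaussianReal (hlaw i)
  have hpair : HasGaussianLaw (fun ω ↦
      ((∑ i ∈ S, X i) ω, (X j - (S.card : ℝ)⁻¹ • ∑ i ∈ S, X i) ω)) P := by
    let T : (S → ℝ) →L[ℝ] ℝ := ∑ i, ContinuousLinearMap.proj i
    convert! hjoint.map (T.prod (ContinuousLinearMap.proj ⟨j, hj⟩ - (S.card : ℝ)⁻¹ • T)) using 1
    ext ω <;> simp [T, Finset.sum_attach S (fun i ↦ X i ω)]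
  refine hpair.indepFun_of_covariance_eq_zero ?_
  rw [covariance_sub_right hLsum (hL j) (hLsum.const_smul _), covariance_smul_right, hcov j hj,
    covariance_sum_right' (fun i _ ↦ hL i) hLsum, Finset.sum_congr rfl hcov]
  simp [hcard]

/-- The truncated mean of a summand, over the event that the sum exceeds a threshold. -/
lemma setIntegral_lt_sum_eq [IsProbabilityMeasure P] (hX : ∀ i, Measurable (X i))
    (hindep : iIndepFun X P) (hv : v ≠ 0) (hlaw : ∀ i, P.map (X i) = gaussianReal 0 v)
    {S : Finset ι} {j : ι} (hj : j ∈ S) (s : ℝ) :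
    ∫ ω in (∑ i ∈ S, X i) ⁻¹' Ioi s, X j ω ∂P = v * gaussianPDFReal 0 (S.card * v) s := by
  have hcard : (S.card : ℝ) ≠ 0 := by
    exact_mod_cast (Finset.card_pos.2 ⟨j, hj⟩).ne'
  have hlawsum := map_sum_eq_gaussianReal hX hindep hlaw S
  have hmean {Y : Ω → ℝ} (hY : Measurable Y) {w : ℝ≥0} (h : P.map Y = gaussianReal 0 w) :
      ∫ ω, Y ω ∂P = 0 := by
    rw [← integral_id_gaussianReal (μ := 0) (v := w), ← h,
      integral_map hY.aemeasurable (by fun_prop)]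
  set T : Ω → ℝ := ∑ i ∈ S, X i with hT
  have hTm : Measurable T := by fun_prop
  have hTi : Integrable T P := (memLp_two_of_map_eq_gaussianReal hlawsum).integrable one_le_two
  have hXi : Integrable (X j) P :=
    (memLp_two_of_map_eq_gaussianReal (hlaw j)).integrable one_le_two
  have hdev : ∫ ω in T ⁻¹' Ioi s, (X j - (S.card : ℝ)⁻¹ • T) ω ∂P = 0 := by
    rw [setIntegral_preimage_eq_mul_of_indepFun (indepFun_sum_sub_mean hX hindep hlaw hj) hTm
      ((hX j).sub (hTm.const_smul _)) measurableSet_Ioi]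
    rw [← hT, integral_sub' hXi (hTi.smul _)]
    simp only [Pi.smul_apply]
    rw [integral_smul, hmean (hX j) (hlaw j), hmean hTm hlawsum]
    simp
  have hsum : ∫ ω in T ⁻¹' Ioi s, T ω ∂P =
      (S.card * v : ℝ≥0) * gaussianPDFReal 0 (S.card * v) s := by
    rw [← setIntegral_Ioi_id_gaussianReal_s9 (mul_ne_zero (by exact_mod_cast hcard) hv), ← hlawsum,
      setIntegral_map measurableSet_Ioi (by fun_prop) hTm.aemeasurable]
  rw [integral_sub' hXi.integrableOn (hTi.smul _).integrableOn] at hdev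
  simp only [Pi.smul_apply] at hdev
  rw [integral_smul, hsum] at hdev
  rw [sub_eq_zero.1 hdev]
  push_cast
  simp only [smul_eq_mul]
  field_simp

end IndependentGaussians

lemma gaussianPDFReal_eq_stdPdf {σ : ℝ} (hσ : 0 < σ) {n : ℕ} (hn : 1 ≤ n) (t : ℝ) :
    σ ^ 2 * gaussianPDFReal 0 (n * (σ ^ 2).toNNReal) (n * t) =
      σ / √n * stdPdf (t / (σ / √n)) := by
  have hn' : (0 : ℝ) < n := by exact_mod_cast hn
  have hsq : √(n : ℝ) ^ 2 = n := sq_sqrt hn'.le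
  have hsqrt : √(2 * π * (n * σ ^ 2)) = √(2 * π) * (√n * σ) := by
    rw [sqrt_mul (by positivity), sqrt_mul hn'.le, sqrt_sq hσ.le]
  have hexp : -(n * t) ^ 2 / (2 * (n * σ ^ 2)) = -(t / (σ / √n)) ^ 2 / 2 := by
    rw [div_pow, div_pow, hsq]
    field_simp
  simp only [gaussianPDFReal, stdPdf, NNReal.coe_mul, NNReal.coe_natCast,
    coe_toNNReal _ (sq_nonneg σ), sub_zero, hsqrt, hexp]
  field_simp

/-- Remark 1 and Corollary 3 (second part): with `μ = 0` and `t₁ = 0`, for every `j ∈ S₂`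
and every `t₂`, the expected actual capital increment of member `j` is the same under both
voting rules and equals `(1/2)·σ₂·φ(t₂/σ₂)`. -/
theorem group2_increment_eq_under_both_rules
    {Ω ι : Type*} [MeasureSpace Ω] [IsProbabilityMeasure (ℙ : Measure Ω)]
    (σ : ℝ) (hσ : 0 < σ)
    (X : ι → Ω → ℝ) (hmeas : ∀ j, Measurable (X j))
    (hindep : iIndepFun X ℙ)
    (hdist : ∀ j, Measure.map (X j) ℙ = gaussianReal 0 ((σ ^ 2).toNNReal))
    (S₁ S₂ : Finset ι) (hdisj : Disjoint S₁ S₂)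
    (g₁ g₂ : ℕ) (hcard₁ : S₁.card = g₁) (hcard₂ : S₂.card = g₂)
    (hg₁ : 1 ≤ g₁) (hg₂ : 1 ≤ g₂)
    (t₂ : ℝ)
    (A₁ A₂ : Ω → ℝ)
    (hA₁ : A₁ = fun ω => (g₁ : ℝ)⁻¹ * ∑ j ∈ S₁, X j ω)
    (hA₂ : A₂ = fun ω => (g₂ : ℝ)⁻¹ * ∑ j ∈ S₂, X j ω)
    :
    ∀ j ∈ S₂,
      (∫ ω in {ω | 0 < A₁ ω} ∪ {ω | t₂ < A₂ ω}, X j ω) =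
        (∫ ω in {ω | 0 < A₁ ω} ∩ {ω | t₂ < A₂ ω}, X j ω) ∧
      (∫ ω in {ω | 0 < A₁ ω} ∩ {ω | t₂ < A₂ ω}, X j ω) =
        (1 / 2) * (σ / Real.sqrt g₂) * stdPdf (t₂ / (σ / Real.sqrt g₂)) := by
  intro j hj
  set v : ℝ≥0 := (σ ^ 2).toNNReal with hv_def
  have hv : v ≠ 0 := by simpa [hv_def] using hσ.ne'
  have hg₁' : (0 : ℝ) < g₁ := by exact_mod_cast hg₁
  have hg₂' : (0 : ℝ) < g₂ := by exact_mod_cast hg₂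
  set T₁ : Ω → ℝ := ∑ i ∈ S₁, X i with hT₁
  set T₂ : Ω → ℝ := ∑ i ∈ S₂, X i with hT₂
  have hT₁m : Measurable T₁ := by fun_prop
  have hT₂m : Measurable T₂ := by fun_prop
  have hG₁ : {ω | 0 < A₁ ω} = T₁ ⁻¹' Ioi 0 := by
    ext ω
    simp [hA₁, hT₁, hg₁']
  have hG₂ : {ω | t₂ < A₂ ω} = T₂ ⁻¹' Ioi (g₂ * t₂) := by
    ext ω
    simp [hA₂, hT₂, lt_inv_mul_iff₀ hg₂']
  have hG₂m : MeasurableSet (T₂ ⁻¹' Ioi (g₂ * t₂)) := hT₂m measurableSet_Ioi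
  have hpair : IndepFun T₁ (fun ω ↦ (T₂ ω, X j ω)) ℙ := by
    have hsum (S : Finset ι) : Measurable fun x : S → ℝ ↦ ∑ i, x i :=
      Finset.measurable_sum _ fun i _ ↦ measurable_pi_apply i
    convert! (hindep.indepFun_finset S₁ S₂ hdisj hmeas).comp (hsum S₁)
      ((hsum S₂).prodMk (measurable_pi_apply (⟨j, hj⟩ : S₂))) using 1
    · ext ω
      simp [hT₁, Finset.sum_attach S₁ (fun i ↦ X i ω)]
    · ext ω <;> simp [hT₂, Finset.sum_attach S₂ (fun i ↦ X i ω)]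
  have hhalf : (ℙ : Measure Ω).real (T₁ ⁻¹' Ioi 0) = 1 / 2 := by
    rw [← map_measureReal_apply hT₁m measurableSet_Ioi,
      map_sum_eq_gaussianReal hmeas hindep hdist S₁, hcard₁]
    exact gaussianReal_real_Ioi_zero (mul_ne_zero (by exact_mod_cast hg₁'.ne') hv)
  have hXi : Integrable (X j) :=
    (memLp_two_of_map_eq_gaussianReal (hdist j)).integrable one_le_two
  have hmean : ∫ ω, X j ω = 0 := by
    rw [← integral_id_gaussianReal (μ := 0) (v := v), ← hdist j,
      integral_map (hmeas j).aemeasurable (by fun_prop)]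
  have hfirst : ∫ ω in T₁ ⁻¹' Ioi 0, X j ω = 0 := by
    have hindepX : IndepFun T₁ (X j) ℙ := hpair.comp measurable_id measurable_snd
    rw [setIntegral_preimage_eq_mul_of_indepFun hindepX hT₁m (hmeas j) measurableSet_Ioi, hmean,
      mul_zero]
  have hsecond : ∫ ω in T₂ ⁻¹' Ioi (g₂ * t₂), X j ω =
      σ / √g₂ * stdPdf (t₂ / (σ / √g₂)) := by
    rw [setIntegral_lt_sum_eq hmeas hindep hv hdist hj, hcard₂,
      ← gaussianPDFReal_eq_stdPdf hσ hg₂, hv_def, coe_toNNReal _ (sq_nonneg σ)]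
  have hinter : ∫ ω in T₁ ⁻¹' Ioi 0 ∩ T₂ ⁻¹' Ioi (g₂ * t₂), X j ω =
      1 / 2 * ∫ ω in T₂ ⁻¹' Ioi (g₂ * t₂), X j ω := by
    have hind : Measurable ((Ioi (g₂ * t₂) ×ˢ univ).indicator (Prod.snd : ℝ × ℝ → ℝ)) :=
      measurable_snd.indicator (measurableSet_Ioi.prod MeasurableSet.univ)
    have hcomp : (Ioi (g₂ * t₂) ×ˢ univ).indicator Prod.snd ∘ (fun ω ↦ (T₂ ω, X j ω)) =
        (T₂ ⁻¹' Ioi (g₂ * t₂)).indicator (X j) := by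
      ext ω
      simp [indicator]
    have hindepG := hpair.comp measurable_id hind
    rw [hcomp] at hindepG
    rw [← setIntegral_indicator hG₂m, ← integral_indicator hG₂m, ← hhalf]
    exact setIntegral_preimage_eq_mul_of_indepFun hindepG hT₁m ((hmeas j).indicator hG₂m)
      measurableSet_Ioi
  have hunion : ∫ ω in T₁ ⁻¹' Ioi 0 ∪ T₂ ⁻¹' Ioi (g₂ * t₂), X j ω =
      (∫ ω in T₂ ⁻¹' Ioi (g₂ * t₂), X j ω) -
        ∫ ω in T₁ ⁻¹' Ioi 0 ∩ T₂ ⁻¹' Ioi (g₂ * t₂), X j ω := by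
    have hsplit := integral_inter_add_sdiff (s := T₁ ⁻¹' Ioi 0) hG₂m hXi.integrableOn
    rw [← sdiff_union_self, setIntegral_union disjoint_sdiff_left hG₂m hXi.integrableOn
      hXi.integrableOn]
    linarith
  rw [hG₁, hG₂, hunion, hinter, hsecond]
  constructor <;> ring
end

section
/- (Corollary 3, first part.) In the two-group voting model with μ = 0, fix t₁ ∈ ℝ and let t ∈ ℝ. Then for every j ∈ S₁, the expected actual capital increment of member j under the unanimous rejection rule with Group 2 threshold t equals that under the unanimous acceptance rule with Group 2 threshold −t: E[X_j·1_{{A₁>t₁} ∪ {A₂>t}}] = E[X_j·1_{{A₁>t₁} ∩ {A₂>−t}}]. -/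
open MeasureTheory ProbabilityTheory Real Set

/-- A finite sum of independent centred Gaussian variables of common variance `v` is a centred
Gaussian variable of variance `card * v`. -/
lemma map_sum_gaussianReal_of_iIndepFun {Ω ι : Type*} [MeasurableSpace Ω] {P : Measure Ω}
    [IsProbabilityMeasure P] {X : ι → Ω → ℝ} {v : NNReal} (hmeas : ∀ j, Measurable (X j))
    (hindep : iIndepFun X P) (hdist : ∀ j, P.map (X j) = gaussianReal 0 v) (S : Finset ι) :
    P.map (∑ j ∈ S, X j) = gaussianReal 0 (S.card * v) := by
  classical
  induction S using Finset.induction_on with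
  | empty =>
    simp only [Finset.sum_empty, Finset.card_empty, Nat.cast_zero, zero_mul, gaussianReal_zero_var]
    exact (Measure.map_const P (0 : ℝ)).trans (by simp)
  | insert i s hi ih =>
    have h := gaussianReal_add_gaussianReal_of_indepFun
      (hindep.indepFun_finsetSum_of_notMem hmeas hi) ih (hdist i)
    rw [Finset.sum_insert hi, add_comm (X i), h, Finset.card_insert_of_notMem hi]
    push_cast
    rw [add_zero, add_one_mul]

/-- A nondegenerate centred Gaussian measure gives opposite half-lines the same mass. -/
lemma gaussianReal_zero_Iic_eq_Ioi_neg {v : NNReal} (hv : v ≠ 0) (t : ℝ) :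
    gaussianReal 0 v (Iic t) = gaussianReal 0 v (Ioi (-t)) := by
  have := nullSingletonClass_gaussianReal (μ := 0) hv
  have h : (gaussianReal 0 v).map (fun x ↦ -x) = gaussianReal 0 v := by
    rw [gaussianReal_map_neg, neg_zero]
  conv_rhs => rw [← h]
  rw [Measure.map_apply measurable_neg measurableSet_Ioi,
    show (fun x : ℝ ↦ -x) ⁻¹' Ioi (-t) = Iio t by ext x; simp]
  exact measure_congr Iio_ae_eq_Iic.symm

/-- An event determined by `W` factors out of a set integral of a function of `Z` when `Z` and `W`
are independent. -/
lemma ProbabilityTheory.IndepFun.setIntegral_preimage_inter_preimage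
    {Ω α β : Type*} [MeasurableSpace Ω] [MeasurableSpace α] [MeasurableSpace β] {P : Measure Ω}
    {Z : Ω → α} {W : Ω → β} (h : IndepFun Z W P) (hZ : Measurable Z) (hW : Measurable W)
    {f : α → ℝ} (hf : Measurable f) {B : Set α} (hB : MeasurableSet B) {C : Set β}
    (hC : MeasurableSet C) :
    ∫ ω in Z ⁻¹' B ∩ W ⁻¹' C, f (Z ω) ∂P = P.real (W ⁻¹' C) * ∫ ω in Z ⁻¹' B, f (Z ω) ∂P := by
  have key := Indep.setIntegral_eq_mul (P := P) (X := Z) (f := B.indicator f) (A := W ⁻¹' C)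
    hW.comap_le h.symm hZ.aemeasurable ⟨C, hC, rfl⟩ (hf.indicator hB).aestronglyMeasurable
  have hind : (fun ω ↦ B.indicator f (Z ω)) = (Z ⁻¹' B).indicator (fun ω ↦ f (Z ω)) := rfl
  rwa [hind, setIntegral_indicator (hZ hB), integral_indicator (hZ hB), inter_comm] at key

/-- Corollary 3 (first part): with `μ = 0` and fixed `t₁`, for every `j ∈ S₁` the expected
actual capital increment of member `j` under the unanimous rejection rule with Group 2
threshold `t` equals that under the unanimous acceptance rule with Group 2 threshold `−t`. -/
theorem group1_increment_duality
    {Ω ι : Type*} [MeasureSpace Ω] [IsProbabilityMeasure (ℙ : Measure Ω)]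
    (σ : ℝ) (hσ : 0 < σ)
    (X : ι → Ω → ℝ) (hmeas : ∀ j, Measurable (X j))
    (hindep : iIndepFun X ℙ)
    (hdist : ∀ j, Measure.map (X j) ℙ = gaussianReal 0 ((σ ^ 2).toNNReal))
    (S₁ S₂ : Finset ι) (hdisj : Disjoint S₁ S₂)
    (g₁ g₂ : ℕ) (hcard₁ : S₁.card = g₁) (hcard₂ : S₂.card = g₂)
    (hg₁ : 1 ≤ g₁) (hg₂ : 1 ≤ g₂)
    (t₁ : ℝ)
    (A₁ A₂ : Ω → ℝ)
    (hA₁ : A₁ = fun ω => (g₁ : ℝ)⁻¹ * ∑ j ∈ S₁, X j ω)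
    (hA₂ : A₂ = fun ω => (g₂ : ℝ)⁻¹ * ∑ j ∈ S₂, X j ω)
    (t : ℝ) :
    ∀ j ∈ S₁,
      (∫ ω in {ω | t₁ < A₁ ω} ∪ {ω | t < A₂ ω}, X j ω) =
        (∫ ω in {ω | t₁ < A₁ ω} ∩ {ω | -t < A₂ ω}, X j ω) := by
  intro j hj
  have hv : (σ ^ 2).toNNReal ≠ 0 := (Real.toNNReal_pos.2 (by positivity)).ne'
  have hX_int : Integrable (X j) (ℙ : Measure Ω) := by
    have h : Integrable id (Measure.map (X j) (ℙ : Measure Ω)) := by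
      rw [hdist j]
      exact (memLp_id_gaussianReal 1).integrable (by simp)
    exact h.comp_measurable (hmeas j)
  have hX_zero : ∫ ω, X j ω = 0 := by
    have h := integral_map (hmeas j).aemeasurable
      (aestronglyMeasurable_id (μ := Measure.map (X j) (ℙ : Measure Ω)))
    rw [hdist j] at h
    simpa using h.symm
  have hA₁_meas : Measurable A₁ := by rw [hA₁]; fun_prop
  have hA₂_meas : Measurable A₂ := by rw [hA₂]; fun_prop
  have hind : IndepFun (fun ω ↦ (X j ω, A₁ ω)) A₂ ℙ := by
    have h := (hindep.indepFun_finset S₁ S₂ hdisj hmeas).comp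
      (φ := fun x ↦ (x ⟨j, hj⟩, (g₁ : ℝ)⁻¹ * ∑ i, x i))
      (ψ := fun x ↦ (g₂ : ℝ)⁻¹ * ∑ i, x i) (by fun_prop) (by fun_prop)
    convert h using 1
    · funext ω
      simp [hA₁, Finset.sum_attach S₁ (fun i ↦ X i ω)]
    · funext ω
      simp [hA₂, Finset.sum_attach S₂ (fun i ↦ X i ω)]
  have hsymm : (ℙ : Measure Ω).real (A₂ ⁻¹' Iic t) = (ℙ : Measure Ω).real (A₂ ⁻¹' Ioi (-t)) := by
    have hsum : HasLaw (∑ i ∈ S₂, X i) (gaussianReal 0 (S₂.card * (σ ^ 2).toNNReal)) ℙ :=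
      ⟨by fun_prop, map_sum_gaussianReal_of_iIndepFun hmeas hindep hdist S₂⟩
    have hlaw := gaussianReal_const_mul hsum (g₂ : ℝ)⁻¹
    have hA₂_eq : (fun ω ↦ (g₂ : ℝ)⁻¹ * (∑ i ∈ S₂, X i) ω) = A₂ := by
      simp [hA₂]
    rw [hA₂_eq, mul_zero] at hlaw
    have hg₂' : (g₂ : ℝ) ≠ 0 := by positivity
    simp only [Measure.real]
    rw [← Measure.map_apply hA₂_meas measurableSet_Iic,
      ← Measure.map_apply hA₂_meas measurableSet_Ioi, hlaw.map_eq,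
      gaussianReal_zero_Iic_eq_Ioi_neg]
    refine mul_ne_zero ?_ (mul_ne_zero ?_ hv)
    · rw [ne_eq, ← NNReal.coe_eq_zero]
      simpa using hg₂'
    · rw [hcard₂]
      exact_mod_cast hg₂'
  have hfactor {B C : Set ℝ} (hB : MeasurableSet B) (hC : MeasurableSet C) :
      ∫ ω in A₁ ⁻¹' B ∩ A₂ ⁻¹' C, X j ω =
        (ℙ : Measure Ω).real (A₂ ⁻¹' C) * ∫ ω in A₁ ⁻¹' B, X j ω :=
    hind.setIntegral_preimage_inter_preimage ((hmeas j).prodMk hA₁_meas) hA₂_meas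
      measurable_fst (measurable_snd hB) hC
  have hunion : {ω | t₁ < A₁ ω} ∪ {ω | t < A₂ ω} = (A₁ ⁻¹' (Ioi t₁)ᶜ ∩ A₂ ⁻¹' Iic t)ᶜ := by
    ext ω
    simp [imp_iff_not_or]
  have hU : MeasurableSet (A₁ ⁻¹' (Ioi t₁)ᶜ ∩ A₂ ⁻¹' Iic t) :=
    (hA₁_meas measurableSet_Ioi.compl).inter (hA₂_meas measurableSet_Iic)
  rw [hunion, setIntegral_compl hU hX_int, hfactor measurableSet_Ioi.compl measurableSet_Iic,
    preimage_compl, setIntegral_compl (hA₁_meas measurableSet_Ioi) hX_int, hX_zero, hsymm]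
  have hinter := hfactor (measurableSet_Ioi (a := t₁)) (measurableSet_Ioi (a := -t))
  change _ = ∫ ω in A₁ ⁻¹' Ioi t₁ ∩ A₂ ⁻¹' Ioi (-t), X j ω
  rw [hinter]
  ring
end
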